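/- arXiv:math/0511730 — 2 statements merged into one kernel-verified Lean document; each statement's English description precedes it below -/
import Mathlib

section
/- Let ψ : Perm(Fin n) → T be the monoid homomorphism with ψ(s_i) = σ_i. If w, v ∈ Perm(Fin n) are such that w({1,2}) ∩ v({1,2}) = ∅, then the elements ψ(w⁻¹)θ_1ψ(w) and ψ(v⁻¹)θ_1ψ(v) of T commute. -/
/-!
The Brauer monoid presentation from Kudryavtseva–Mazorchuk,
"On presentations of Brauer-type monoids", Section 3.

Generators: `Sum.inl i` represents `σ_{i+1}` and `Sum.inr i` represents `θ_{i+1}`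
for `i : Fin (n-1)` (so the paper's indices `1, …, n-1` correspond to `i.val + 1`).
-/

/-- Generator type: `Sum.inl i` is `σ_{i+1}`, `Sum.inr i` is `θ_{i+1}`. -/
abbrev BrauerGen (n : ℕ) := Fin (n - 1) ⊕ Fin (n - 1)

/-- The word `σ_{i+1}` in the free monoid. -/
def fσ {n : ℕ} (i : Fin (n - 1)) : FreeMonoid (BrauerGen n) := FreeMonoid.of (Sum.inl i)

/-- The word `θ_{i+1}` in the free monoid. -/
def fθ {n : ℕ} (i : Fin (n - 1)) : FreeMonoid (BrauerGen n) := FreeMonoid.of (Sum.inr i)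

/-- The defining relations of the presentation of the Brauer monoid `𝔅_n`. -/
inductive BrauerRel (n : ℕ) : FreeMonoid (BrauerGen n) → FreeMonoid (BrauerGen n) → Prop
  | sigma_sq (i) : BrauerRel n (fσ i * fσ i) 1
  | sigma_comm (i j) (h : 1 < Nat.dist i.1 j.1) : BrauerRel n (fσ i * fσ j) (fσ j * fσ i)
  | braid (i j) (h : Nat.dist i.1 j.1 = 1) :
      BrauerRel n (fσ i * fσ j * fσ i) (fσ j * fσ i * fσ j)
  | theta_idem (i) : BrauerRel n (fθ i * fθ i) (fθ i)
  | theta_comm (i j) (h : 1 < Nat.dist i.1 j.1) : BrauerRel n (fθ i * fθ j) (fθ j * fθ i)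
  | theta_theta_theta (i j) (h : Nat.dist i.1 j.1 = 1) :
      BrauerRel n (fθ i * fθ j * fθ i) (fθ i)
  | theta_sigma (i) : BrauerRel n (fθ i * fσ i) (fθ i)
  | sigma_theta (i) : BrauerRel n (fσ i * fθ i) (fθ i)
  | theta_sigma_comm (i j) (h : 1 < Nat.dist i.1 j.1) :
      BrauerRel n (fθ i * fσ j) (fσ j * fθ i)
  | sigma_theta_theta (i j) (h : Nat.dist i.1 j.1 = 1) :
      BrauerRel n (fσ i * fθ j * fθ i) (fσ j * fθ i)
  | theta_theta_sigma (i j) (h : Nat.dist i.1 j.1 = 1) :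
      BrauerRel n (fθ i * fθ j * fσ i) (fθ i * fσ j)

/-- The monoid `T` given by the presentation above. -/
abbrev BrauerMonoid (n : ℕ) := PresentedMonoid (BrauerRel n)

/-- The generator `σ_{i+1}` of `T`. -/
def σB {n : ℕ} (i : Fin (n - 1)) : BrauerMonoid n := PresentedMonoid.of (BrauerRel n) (Sum.inl i)

/-- The generator `θ_{i+1}` of `T`. -/
def θB {n : ℕ} (i : Fin (n - 1)) : BrauerMonoid n := PresentedMonoid.of (BrauerRel n) (Sum.inr i)

/-- The point `i` of `{1, …, n}` (0-based: `i.val`). -/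
def lo {n : ℕ} (i : Fin (n - 1)) : Fin n := ⟨i.1, by have := i.2; omega⟩

/-- The point `i + 1` of `{1, …, n}` (0-based: `i.val + 1`). -/
def hi {n : ℕ} (i : Fin (n - 1)) : Fin n := ⟨i.1 + 1, by have := i.2; omega⟩

/-- The adjacent transposition `s_{i+1} = (i+1, i+2)` of the symmetric group on `{1, …, n}`. -/
def sPerm {n : ℕ} (i : Fin (n - 1)) : Equiv.Perm (Fin n) := Equiv.swap (lo i) (hi i)

/-!
The symmetric group acts on `T` by conjugation through `ψ`. The pointwise stabilizer of `{1, 2}` is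
generated by the `s_k` with `k ≥ 3`, and these fix `θ_1`; moreover `s_i s_{i+1}` conjugates `θ_i` to
`θ_{i+1}` and maps `(i, i+1)` to `(i+1, i+2)`. Hence a permutation mapping `(i, i+1)` to
`(j, j+1)` conjugates `θ_i` to `θ_j`, whatever it does elsewhere. Since the symmetric group is
4-transitive, one permutation moves two disjoint pairs to `(1, 2)` and `(3, 4)` simultaneously,
which reduces the claim to the relation `θ_1 θ_3 = θ_3 θ_1`.
-/

open Equiv MulAction

section Conjugation

variable {G M : Type*} [Group G] [Monoid M]

/-- The action of a group `G` on a monoid `M` by conjugation through a homomorphism `ψ : G →* M`: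
the automorphism attached to `g` is `t ↦ ψ g * t * ψ g⁻¹`. -/
def conjAut (ψ : G →* M) : G →* MulAut M :=
  (MulDistribMulAction.toMulAut (ConjAct Mˣ) M).comp
    (ConjAct.toConjAct.toMonoidHom.comp ψ.toHomUnits)

theorem conjAut_apply (ψ : G →* M) (g : G) (t : M) : conjAut ψ g t = ψ g * t * ψ g⁻¹ := rfl

theorem conjAut_inv_apply (ψ : G →* M) (g : G) (t : M) :
    conjAut ψ g⁻¹ t = ψ g⁻¹ * t * ψ g := by
  rw [conjAut_apply, inv_inv]

theorem conjAut_apply_eq_self {ψ : G →* M} {g : G} {t : M} (h : Commute (ψ g) t) :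
    conjAut ψ g t = t := by
  rw [conjAut_apply, h.eq, mul_assoc, ← map_mul, mul_inv_cancel, map_one, mul_one]

end Conjugation

section AdjacentTranspositions

variable {n : ℕ}

theorem lo_ne_hi (i : Fin (n - 1)) : lo i ≠ hi i := by
  simp [lo, hi]

theorem sPerm_isSwap (i : Fin (n - 1)) : (sPerm i).IsSwap :=
  ⟨lo i, hi i, lo_ne_hi i, rfl⟩

theorem mem_orbit_closure_sPerm_of_le {m : ℕ} {x y : Fin n} (hx : m ≤ x) (hxy : x ≤ y) :
    y ∈ orbit (Subgroup.closure (sPerm '' {k : Fin (n - 1) | m ≤ k})) x := by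
  obtain ⟨y, hy⟩ := y
  replace hxy : (x : ℕ) ≤ y := hxy
  induction y, hxy using Nat.le_induction with
  | base => exact mem_orbit_self x
  | succ y hxy ih =>
    let k : Fin (n - 1) := ⟨y, by omega⟩
    have hk : sPerm k ∈ Subgroup.closure (sPerm '' {k : Fin (n - 1) | m ≤ k}) :=
      Subgroup.subset_closure ⟨k, hx.trans hxy, rfl⟩
    have hstep : (⟨sPerm k, hk⟩ : Subgroup.closure _) • lo k = hi k := swap_apply_left _ _
    rw [show (⟨y + 1, hy⟩ : Fin n) = hi k from rfl, ← hstep]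
    exact mem_orbit_of_mem_orbit _ (ih (by omega))

theorem mem_closure_sPerm_of_forall_lt_fixed {m : ℕ} {g : Perm (Fin n)}
    (hg : ∀ x : Fin n, x < m → g x = x) :
    g ∈ Subgroup.closure (sPerm '' {k : Fin (n - 1) | m ≤ k}) := by
  refine (mem_closure_isSwap (Set.forall_mem_image.2 fun k _ ↦ sPerm_isSwap k)).2
    ⟨Set.toFinite _, fun x ↦ ?_⟩
  rcases lt_or_ge (x : ℕ) m with hx | hx
  · rw [hg x hx]
    exact mem_orbit_self x
  have hgx : m ≤ g x := by
    by_contra! hlt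
    have hfix : g x = x := g.injective (hg (g x) hlt)
    exact hlt.not_ge (hfix.symm ▸ hx)
  rcases le_total x (g x) with hle | hle
  · exact mem_orbit_closure_sPerm_of_le hx hle
  · exact mem_orbit_symm.1 (mem_orbit_closure_sPerm_of_le hgx hle)

theorem sPerm_mul_sPerm_apply_lo {i j : Fin (n - 1)} (hij : (j : ℕ) = i + 1) :
    (sPerm i * sPerm j) (lo i) = lo j := by
  grind [sPerm, lo, hi, Perm.mul_apply]

theorem sPerm_mul_sPerm_apply_hi {i j : Fin (n - 1)} (hij : (j : ℕ) = i + 1) :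
    (sPerm i * sPerm j) (hi i) = hi j := by
  grind [sPerm, lo, hi, Perm.mul_apply]

end AdjacentTranspositions

section Relations

variable {n : ℕ} {i j : Fin (n - 1)}

theorem σB_mul_self (i : Fin (n - 1)) : σB i * σB i = 1 :=
  PresentedMonoid.mk_eq_mk_of_rel (.sigma_sq i)

theorem commute_θB_θB (h : 1 < Nat.dist i j) : Commute (θB i) (θB j) :=
  PresentedMonoid.mk_eq_mk_of_rel (.theta_comm i j h)

theorem commute_σB_θB (h : 1 < Nat.dist i j) : Commute (σB j) (θB i) :=
  (PresentedMonoid.mk_eq_mk_of_rel (.theta_sigma_comm i j h)).symm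

theorem θB_mul_θB_mul_θB (h : Nat.dist i j = 1) : θB i * θB j * θB i = θB i :=
  PresentedMonoid.mk_eq_mk_of_rel (.theta_theta_theta i j h)

theorem σB_mul_σB_mul_θB (h : Nat.dist i j = 1) : σB i * (σB j * θB i) = θB j * θB i := by
  have hrel : σB i * θB j * θB i = σB j * θB i :=
    PresentedMonoid.mk_eq_mk_of_rel (.sigma_theta_theta i j h)
  rw [← hrel, mul_assoc, ← mul_assoc, σB_mul_self, one_mul]

theorem θB_mul_σB_mul_σB (h : Nat.dist i j = 1) : θB i * σB j * σB i = θB i * θB j := by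
  have hrel : θB i * θB j * σB i = θB i * σB j :=
    PresentedMonoid.mk_eq_mk_of_rel (.theta_theta_sigma i j h)
  rw [← hrel, mul_assoc, σB_mul_self, mul_one]

end Relations

section ConjugatesOfTheta

variable {n : ℕ} {ψ : Perm (Fin n) →* BrauerMonoid n}

theorem conjAut_sPerm_mul_sPerm_θB (hψ : ∀ i, ψ (sPerm i) = σB i) {i j : Fin (n - 1)}
    (h : Nat.dist i j = 1) : conjAut ψ (sPerm i * sPerm j) (θB i) = θB j := by
  have hinv : (sPerm i * sPerm j)⁻¹ = sPerm j * sPerm i := by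
    simp only [sPerm, mul_inv_rev, swap_inv]
  calc conjAut ψ (sPerm i * sPerm j) (θB i)
      = σB i * (σB j * θB i) * (σB j * σB i) := by
        rw [conjAut_apply, hinv, map_mul, map_mul, hψ, hψ, mul_assoc (σB i)]
    _ = θB j * (θB i * σB j * σB i) := by
        rw [σB_mul_σB_mul_θB h, mul_assoc, mul_assoc (θB i)]
    _ = θB j := by
        rw [θB_mul_σB_mul_σB h, ← mul_assoc, θB_mul_θB_mul_θB (Nat.dist_comm _ _ ▸ h)]

theorem conjAut_θB_zero_of_fixed (hψ : ∀ i, ψ (sPerm i) = σB i) (hn : 0 < n - 1)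
    {g : Perm (Fin n)} (hlo : g (lo ⟨0, hn⟩) = lo ⟨0, hn⟩) (hhi : g (hi ⟨0, hn⟩) = hi ⟨0, hn⟩) :
    conjAut ψ g (θB ⟨0, hn⟩) = θB ⟨0, hn⟩ := by
  have hfixed : ∀ x : Fin n, (x : ℕ) < 2 → g x = x := by
    rintro ⟨x, hx⟩ hx2
    interval_cases x
    exacts [hlo, hhi]
  have hgen : Subgroup.closure (sPerm '' {k : Fin (n - 1) | 2 ≤ (k : ℕ)}) ≤
      (stabilizer (MulAut (BrauerMonoid n)) (θB ⟨0, hn⟩)).comap (conjAut ψ) := by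
    refine (Subgroup.closure_le _).2 (Set.image_subset_iff.2 fun k (hk : 2 ≤ (k : ℕ)) ↦ ?_)
    refine conjAut_apply_eq_self ((hψ k).symm ▸ commute_σB_θB ?_)
    simp only [Nat.dist]
    omega
  exact hgen (mem_closure_sPerm_of_forall_lt_fixed hfixed)

theorem exists_conjAut_θB_zero_eq (hψ : ∀ i, ψ (sPerm i) = σB i) (hn : 0 < n - 1)
    (i : Fin (n - 1)) :
    ∃ g : Perm (Fin n), g (lo ⟨0, hn⟩) = lo i ∧ g (hi ⟨0, hn⟩) = hi i ∧
      conjAut ψ g (θB ⟨0, hn⟩) = θB i := by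
  obtain ⟨i, hlt⟩ := i
  induction i with
  | zero => exact ⟨1, rfl, rfl, by rw [map_one, MulAut.one_apply]⟩
  | succ i ih =>
    obtain ⟨g, glo, ghi, gθ⟩ := ih (by omega)
    refine ⟨sPerm ⟨i, by omega⟩ * sPerm ⟨i + 1, hlt⟩ * g, ?_, ?_, ?_⟩
    · rw [Perm.mul_apply, glo, sPerm_mul_sPerm_apply_lo rfl]
    · rw [Perm.mul_apply, ghi, sPerm_mul_sPerm_apply_hi rfl]
    · rw [map_mul, MulAut.mul_apply, gθ, conjAut_sPerm_mul_sPerm_θB hψ (by simp [Nat.dist])]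

theorem conjAut_θB_eq (hψ : ∀ i, ψ (sPerm i) = σB i) {g : Perm (Fin n)} {i j : Fin (n - 1)}
    (hlo : g (lo i) = lo j) (hhi : g (hi i) = hi j) : conjAut ψ g (θB i) = θB j := by
  obtain ⟨a, alo, ahi, aθ⟩ := exists_conjAut_θB_zero_eq hψ i.pos i
  obtain ⟨b, blo, bhi, bθ⟩ := exists_conjAut_θB_zero_eq hψ i.pos j
  have hfix : conjAut ψ (b⁻¹ * g * a) (θB ⟨0, i.pos⟩) = θB ⟨0, i.pos⟩ :=
    conjAut_θB_zero_of_fixed hψ i.pos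
      (by rw [Perm.mul_apply, Perm.mul_apply, alo, hlo, Perm.inv_eq_iff_eq, blo])
      (by rw [Perm.mul_apply, Perm.mul_apply, ahi, hhi, Perm.inv_eq_iff_eq, bhi])
  calc conjAut ψ g (θB i)
      = conjAut ψ (b * (b⁻¹ * g * a)) (θB ⟨0, i.pos⟩) := by
        rw [← aθ, ← MulAut.mul_apply, ← map_mul]
        group
    _ = θB j := by rw [map_mul, MulAut.mul_apply, hfix, bθ]

end ConjugatesOfTheta

theorem injective_vec_of_disjoint_pairs {α : Type*} {a b c d : α} (hab : a ≠ b) (hcd : c ≠ d)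
    (h : Disjoint ({a, b} : Set α) {c, d}) : Function.Injective ![a, b, c, d] := by
  simp only [Set.disjoint_insert_left, Set.disjoint_singleton_left, Set.mem_insert_iff,
    Set.mem_singleton_iff, not_or] at h
  rw [← List.nodup_ofFn]
  simp [hab, hcd, h]

theorem exists_perm_apply_eq_castLE {n k : ℕ} {p : Fin k → Fin n} (hp : Function.Injective p) :
    ∃ (hk : k ≤ n) (g : Perm (Fin n)), ∀ a, g (p a) = Fin.castLE hk a := by
  have hk : k ≤ n := by simpa using Fintype.card_le_of_injective p hp
  obtain ⟨g, hg⟩ := Perm.exists_extending_pair p (Fin.castLE hk) hp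
    (Fin.castLE_injective hk)
  exact ⟨hk, g, hg⟩

theorem brauer_eps_commute_general {n : ℕ} {ψ : Perm (Fin n) →* BrauerMonoid n}
    (hψ : ∀ i, ψ (sPerm i) = σB i) {w v : Perm (Fin n)} {i j : Fin (n - 1)}
    (h : Disjoint (⇑w⁻¹ '' {lo i, hi i}) (⇑v⁻¹ '' {lo j, hi j})) :
    Commute (ψ w⁻¹ * θB i * ψ w) (ψ v⁻¹ * θB j * ψ v) := by
  have hinj : Function.Injective ![w⁻¹ (lo i), w⁻¹ (hi i), v⁻¹ (lo j), v⁻¹ (hi j)] :=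
    injective_vec_of_disjoint_pairs ((w⁻¹).injective.ne (lo_ne_hi i))
      ((v⁻¹).injective.ne (lo_ne_hi j)) (by simpa only [Set.image_pair] using h)
  obtain ⟨hn, g, hg⟩ := exists_perm_apply_eq_castLE hinj
  have hw : conjAut ψ g (conjAut ψ w⁻¹ (θB i)) = θB ⟨0, by omega⟩ := by
    rw [← MulAut.mul_apply, ← map_mul]
    exact conjAut_θB_eq hψ (hg 0) (hg 1)
  have hv : conjAut ψ g (conjAut ψ v⁻¹ (θB j)) = θB ⟨2, by omega⟩ := by
    rw [← MulAut.mul_apply, ← map_mul]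
    exact conjAut_θB_eq hψ (hg 2) (hg 3)
  rw [← conjAut_inv_apply, ← conjAut_inv_apply, ← commute_map_iff (conjAut ψ g).injective, hw, hv]
  exact commute_θB_θB (by simp [Nat.dist])

/-- Lemma `lemma203` of Kudryavtseva–Mazorchuk: if `w({1,2}) ∩ v({1,2}) = ∅` then the
conjugates `ψ(w⁻¹) θ_1 ψ(w)` and `ψ(v⁻¹) θ_1 ψ(v)` commute.  (The symmetric group acts on
`{1, …, n}` on the *right*, so `w({1,2})` is the image of `{1,2}` under `⇑w⁻¹` in terms of
Mathlib's left-composition convention for `Equiv.Perm`.) -/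
theorem brauer_eps_commute (n : ℕ) (hn : 4 ≤ n)
    (ψ : Equiv.Perm (Fin n) →* BrauerMonoid n)
    (hψ : ∀ i : Fin (n - 1), ψ (sPerm i) = σB i)
    (w v : Equiv.Perm (Fin n))
    (h : ⇑w⁻¹ '' ({⟨0, by omega⟩, ⟨1, by omega⟩} : Set (Fin n)) ∩
         ⇑v⁻¹ '' ({⟨0, by omega⟩, ⟨1, by omega⟩} : Set (Fin n)) = ∅) :
    Commute (ψ w⁻¹ * θB ⟨0, by omega⟩ * ψ w) (ψ v⁻¹ * θB ⟨0, by omega⟩ * ψ v) := by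
  exact brauer_eps_commute_general hψ (Set.disjoint_iff_inter_eq_empty.2 h)
end

section
/- Let ψ : Perm(Fin n) → T be the monoid homomorphism with ψ(s_i) = σ_i, and for 0 ≤ k ≤ ⌊n/2⌋ let δ_k = θ_1θ_3⋯θ_{2k−1} (with δ_0 = 1). Then every element x ∈ T can be written as x = ψ(w)·δ_k·ψ(v) for some permutations w, v ∈ Perm(Fin n) and some k with 0 ≤ k ≤ ⌊n/2⌋. -/
/-- The canonical element `δ_k = θ_1 θ_3 ⋯ θ_{2k-1}` of `T` (with `δ_0 = 1`),
for `0 ≤ k ≤ ⌊n/2⌋`. -/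
def δB (n : ℕ) (k : ℕ) (hk : k ≤ n / 2) : BrauerMonoid n :=
  (List.ofFn fun j : Fin k => θB (n := n) ⟨2 * j.1, by have := j.2; omega⟩).prod

/-!
Picture the generator `θ_i` as an arc joining `i` and `i + 1`. Conjugating it by `ψ g` moves the arc
to any other pair of points, and the result depends only on that pair: the stabilizer of
`{1, 2}` is generated by `s_1` and the `s_j` with `j ≥ 3`, all of which commute with `θ_1`.
Multiplying `δ_k` by an arc then has three outcomes. An arc of `δ_k` is absorbed. An arc meeting an
arc of `δ_k` in exactly one point is replaced by a permutation, because
`θ_i θ_j = θ_i σ_j σ_i` for adjacent `i` and `j`. An arc avoiding all arcs of `δ_k` is moved to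
`{2k + 1, 2k + 2}` by a permutation commuting with `δ_k`, and yields `δ_{k + 1}`.
-/

section GroupToMonoid

variable {G M : Type*} [Group G] [Monoid M] {f : G →* M}

theorem semiconjBy_map_inv {g : G} {x y : M} (h : SemiconjBy (f g) x y) :
    SemiconjBy (f g⁻¹) y x :=
  SemiconjBy.units_inv_symm_left (a := f.toHomUnits g) h

theorem commute_map_of_mem_closure {S : Set G} {x : M} (hS : ∀ s ∈ S, Commute (f s) x)
    {g : G} (hg : g ∈ Subgroup.closure S) : Commute (f g) x := by
  induction hg using Subgroup.closure_induction with
  | mem s hs => exact hS s hs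
  | one => exact map_one f ▸ Commute.one_left x
  | mul a b _ _ ha hb => exact map_mul f a b ▸ ha.mul_left hb
  | inv a _ ha => exact semiconjBy_map_inv ha

end GroupToMonoid

theorem exists_perm_mapping_triple {α : Type*} {a b c x y z : α} (hab : a ≠ b) (hac : a ≠ c)
    (hbc : b ≠ c) (hxy : x ≠ y) (hxz : x ≠ z) (hyz : y ≠ z) :
    ∃ g : Equiv.Perm α, g a = x ∧ g b = y ∧ g c = z := by
  have triple_injective {p q r : α} (hpq : p ≠ q) (hpr : p ≠ r) (hqr : q ≠ r) :
      Function.Injective ![p, q, r] := by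
    intro i j
    fin_cases i <;> fin_cases j <;> simp [*, Ne.symm]
  obtain ⟨g, hg⟩ := Equiv.Perm.exists_extending_pair _ _
    (triple_injective hab hac hbc) (triple_injective hxy hxz hyz)
  exact ⟨g, hg 0, hg 1, hg 2⟩

namespace BrauerMonoid

variable {n : ℕ}

section Permutations

theorem lo_ne_hi (i : Fin (n - 1)) : lo i ≠ hi i := by
  simp [lo, hi]

theorem isSwap_sPerm (i : Fin (n - 1)) : (sPerm i).IsSwap :=
  ⟨lo i, hi i, lo_ne_hi i, rfl⟩

theorem sPerm_mul_self (i : Fin (n - 1)) : sPerm i * sPerm i = 1 :=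
  Equiv.swap_mul_self _ _

theorem mem_orbit_closure_sPerm {m : ℕ} {x y : Fin n} (hx : m ≤ x.1) (hxy : x ≤ y) :
    y ∈ MulAction.orbit (Subgroup.closure (sPerm '' {i : Fin (n - 1) | m ≤ i.1})) x := by
  obtain ⟨y, hy⟩ := y
  change x.1 ≤ y at hxy
  induction y, hxy using Nat.le_induction with
  | base => exact MulAction.mem_orbit_self x
  | succ y hxy ih =>
    let i : Fin (n - 1) := ⟨y, by omega⟩
    have hs : sPerm i ∈ Subgroup.closure (sPerm '' {i : Fin (n - 1) | m ≤ i.1}) :=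
      Subgroup.subset_closure ⟨i, hx.trans hxy, rfl⟩
    have hstep : sPerm i (lo i) = hi i := Equiv.swap_apply_left _ _
    change hi i ∈ _
    rw [← hstep]
    exact MulAction.mem_orbit_of_mem_orbit ⟨sPerm i, hs⟩ (ih (by omega))

theorem mem_closure_sPerm_of_fixed {m : ℕ} {g : Equiv.Perm (Fin n)}
    (hg : ∀ x : Fin n, x.1 < m → g x = x) :
    g ∈ Subgroup.closure (sPerm '' {i : Fin (n - 1) | m ≤ i.1}) := by
  have hswap : ∀ s ∈ sPerm '' {i : Fin (n - 1) | m ≤ i.1}, s.IsSwap := by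
    rintro _ ⟨i, -, rfl⟩
    exact isSwap_sPerm i
  refine (mem_closure_isSwap hswap).2 ⟨Set.toFinite _, fun x => ?_⟩
  by_cases hx : x.1 < m
  · exact (hg x hx).symm ▸ MulAction.mem_orbit_self x
  have hgx : m ≤ (g x).1 := by
    by_contra! hlt
    exact hx (g.injective (hg _ hlt) ▸ hlt)
  rcases le_total x (g x) with hle | hle
  · exact mem_orbit_closure_sPerm (not_lt.1 hx) hle
  · exact MulAction.mem_orbit_symm.1 (mem_orbit_closure_sPerm hgx hle)

theorem exists_perm_fixing_lt_and_mapping_edge {m : Fin (n - 1)} {a b : Fin n} (hab : a ≠ b)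
    (ha : m.1 ≤ a.1) (hb : m.1 ≤ b.1) :
    ∃ g : Equiv.Perm (Fin n), (∀ x : Fin n, x.1 < m.1 → g x = x) ∧
      g (lo m) = a ∧ g (hi m) = b := by
  let target (x : {x : Fin n // x.1 ≤ m.1 + 1}) : Fin n :=
    if x.1.1 < m.1 then x else if x.1 = lo m then a else b
  have target_injective : Function.Injective target := by
    rintro ⟨x, hx⟩ ⟨y, hy⟩ hxy
    simp only [target, lo, Fin.ext_iff] at *
    grind
  obtain ⟨g, hg⟩ := Equiv.Perm.exists_extending_pair _ _ Subtype.val_injective target_injective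
  refine ⟨g, fun x hx => ?_, ?_, ?_⟩
  · simpa [target, hx] using hg ⟨x, by omega⟩
  · simpa [target, lo] using hg ⟨lo m, by simp [lo]⟩
  · simpa [target, lo, hi] using hg ⟨hi m, le_rfl⟩

/-- The arc of the generator `θ_i`: the pair `{i, i + 1}` of points it joins, unordered so that
`σ_i` fixes it. Permutations move arcs by `Sym2.map`. -/
def edge (i : Fin (n - 1)) : Sym2 (Fin n) := s(lo i, hi i)

theorem ne_of_map_edge_eq {i : Fin (n - 1)} {g : Equiv.Perm (Fin n)} {a b : Fin n}
    (h : (edge i).map g = s(a, b)) : a ≠ b := by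
  rintro rfl
  have : (edge i).map g |>.IsDiag := h ▸ Sym2.diag_isDiag a
  exact lo_ne_hi i (g.injective this)

theorem conj_sPerm_of_map_edge_eq {i : Fin (n - 1)} {g : Equiv.Perm (Fin n)} {a b : Fin n}
    (h : (edge i).map g = s(a, b)) : g * sPerm i * g⁻¹ = Equiv.swap a b := by
  rw [sPerm, ← Equiv.swap_apply_apply]
  rcases Sym2.eq_iff.1 h with ⟨hlo, hhi⟩ | ⟨hlo, hhi⟩
  · rw [hlo, hhi]
  · rw [hlo, hhi, Equiv.swap_comm]

theorem map_sPerm_mul_sPerm_edge {i j : Fin (n - 1)} (h : Nat.dist i.1 j.1 = 1) :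
    (edge i).map (sPerm i * sPerm j) = edge j := by
  have hlo : (sPerm i * sPerm j) (lo i) = lo j := by
    simp only [sPerm, Equiv.Perm.mul_apply, Equiv.swap_apply_def, lo, hi, Fin.ext_iff]
    simp only [Nat.dist] at h
    grind
  have hhi : (sPerm i * sPerm j) (hi i) = hi j := by
    simp only [sPerm, Equiv.Perm.mul_apply, Equiv.swap_apply_def, lo, hi, Fin.ext_iff]
    simp only [Nat.dist] at h
    grind
  exact congrArg₂ (s(·, ·)) hlo hhi

end Permutations

section Relations

variable (i : Fin (n - 1)) {j : Fin (n - 1)}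

theorem sigma_mul_self : σB i * σB i = 1 :=
  PresentedMonoid.mk_eq_mk_of_rel (.sigma_sq i)

theorem theta_mul_self : θB i * θB i = θB i :=
  PresentedMonoid.mk_eq_mk_of_rel (.theta_idem i)

theorem commute_sigma_theta_self : Commute (σB i) (θB i) :=
  (PresentedMonoid.mk_eq_mk_of_rel (.sigma_theta i)).trans
    (PresentedMonoid.mk_eq_mk_of_rel (.theta_sigma i)).symm

variable {i}

theorem commute_theta_theta (h : 1 < Nat.dist i.1 j.1) : Commute (θB i) (θB j) :=
  PresentedMonoid.mk_eq_mk_of_rel (.theta_comm i j h)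

theorem commute_theta_sigma (h : 1 < Nat.dist i.1 j.1) : Commute (θB i) (σB j) :=
  PresentedMonoid.mk_eq_mk_of_rel (.theta_sigma_comm i j h)

theorem theta_mul_theta_eq_theta_mul_sigma_mul_sigma (h : Nat.dist i.1 j.1 = 1) :
    θB i * θB j = θB i * (σB j * σB i) := by
  have rel : θB i * θB j * σB i = θB i * σB j :=
    PresentedMonoid.mk_eq_mk_of_rel (.theta_theta_sigma i j h)
  rw [← mul_assoc, ← rel, mul_assoc _ (σB i), sigma_mul_self, mul_one]

theorem theta_mul_theta_eq_sigma_mul_sigma_mul_theta (h : Nat.dist i.1 j.1 = 1) :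
    θB j * θB i = σB i * σB j * θB i := by
  have rel : σB i * θB j * θB i = σB j * θB i :=
    PresentedMonoid.mk_eq_mk_of_rel (.sigma_theta_theta i j h)
  rw [mul_assoc, ← rel, ← mul_assoc, ← mul_assoc, sigma_mul_self, one_mul]

theorem semiconjBy_sigma_mul_sigma (h : Nat.dist i.1 j.1 = 1) :
    SemiconjBy (σB i * σB j) (θB i) (θB j) :=
  (theta_mul_theta_eq_sigma_mul_sigma_mul_theta h).symm.trans
    (theta_mul_theta_eq_theta_mul_sigma_mul_sigma (Nat.dist_comm i.1 j.1 ▸ h))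

end Relations

section Arcs

variable {ψ : Equiv.Perm (Fin n) →* BrauerMonoid n}
  (hψ : ∀ i : Fin (n - 1), ψ (sPerm i) = σB i)

include hψ

theorem commute_map_of_fixed {m : ℕ} {x : BrauerMonoid n}
    (hx : ∀ i : Fin (n - 1), m ≤ i.1 → Commute (σB i) x) {g : Equiv.Perm (Fin n)}
    (hg : ∀ p : Fin n, p.1 < m → g p = p) : Commute (ψ g) x := by
  refine commute_map_of_mem_closure ?_ (mem_closure_sPerm_of_fixed hg)
  rintro _ ⟨i, hmi, rfl⟩
  exact hψ i ▸ hx i hmi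

theorem commute_map_theta_zero_of_fixed (hn : 0 < n - 1) {g : Equiv.Perm (Fin n)}
    (hlo : g (lo ⟨0, hn⟩) = lo ⟨0, hn⟩) (hhi : g (hi ⟨0, hn⟩) = hi ⟨0, hn⟩) :
    Commute (ψ g) (θB ⟨0, hn⟩) := by
  refine commute_map_of_fixed hψ (m := 2) (fun i _ => ?_) fun p hp => ?_
  · exact (commute_theta_sigma (by simp only [Nat.dist]; omega)).symm
  · have : p = lo ⟨0, hn⟩ ∨ p = hi ⟨0, hn⟩ := by
      simp only [lo, hi, Fin.ext_iff]; omega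
    rcases this with rfl | rfl <;> assumption

theorem commute_map_theta_zero (hn : 0 < n - 1) {g : Equiv.Perm (Fin n)}
    (hg : (edge ⟨0, hn⟩).map g = edge ⟨0, hn⟩) : Commute (ψ g) (θB ⟨0, hn⟩) := by
  set z : Fin (n - 1) := ⟨0, hn⟩
  rcases Sym2.eq_iff.1 hg with ⟨hlo, hhi⟩ | ⟨hlo, hhi⟩
  · exact commute_map_theta_zero_of_fixed hψ hn hlo hhi
  · have hswap : Commute (ψ (sPerm z * g)) (θB z) :=
      commute_map_theta_zero_of_fixed hψ hn (by simp [hlo, sPerm, z]) (by simp [hhi, sPerm, z])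
    have hfactor : ψ g = σB z * ψ (sPerm z * g) := by
      rw [← hψ, ← map_mul, ← mul_assoc, sPerm_mul_self, one_mul]
    exact hfactor ▸ (commute_sigma_theta_self z).mul_left hswap

theorem exists_semiconjBy_theta_zero (hn : 0 < n - 1) (i : Fin (n - 1)) :
    ∃ g : Equiv.Perm (Fin n),
      (edge ⟨0, hn⟩).map g = edge i ∧ SemiconjBy (ψ g) (θB ⟨0, hn⟩) (θB i) := by
  obtain ⟨d, hd⟩ := i
  induction d with
  | zero => exact ⟨1, congrFun Sym2.map_id _, map_one ψ ▸ SemiconjBy.one_left _⟩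
  | succ d ih =>
    obtain ⟨g, hedge, hg⟩ := ih (by omega)
    let i : Fin (n - 1) := ⟨d, by omega⟩
    let j : Fin (n - 1) := ⟨d + 1, hd⟩
    have hij : Nat.dist i.1 j.1 = 1 := by simp [i, j, Nat.dist]
    refine ⟨sPerm i * sPerm j * g, ?_, ?_⟩
    · rw [Equiv.Perm.coe_mul, Sym2.map_comp, Function.comp_apply, hedge,
        map_sPerm_mul_sPerm_edge hij]
    · rw [map_mul, map_mul, hψ, hψ]
      exact (semiconjBy_sigma_mul_sigma hij).mul_left hg

theorem semiconjBy_map_theta {i j : Fin (n - 1)} {g : Equiv.Perm (Fin n)}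
    (hg : (edge i).map g = edge j) : SemiconjBy (ψ g) (θB i) (θB j) := by
  have hn : 0 < n - 1 := i.pos
  obtain ⟨a, ha_edge, ha⟩ := exists_semiconjBy_theta_zero hψ hn i
  obtain ⟨b, hb_edge, hb⟩ := exists_semiconjBy_theta_zero hψ hn j
  have hstab : (edge ⟨0, hn⟩).map (b⁻¹ * g * a) = edge ⟨0, hn⟩ := by
    apply Sym2.map.injective b.injective
    rw [hb_edge, Sym2.map_map, ← Equiv.Perm.coe_mul, show b * (b⁻¹ * g * a) = g * a by group,
      Equiv.Perm.coe_mul, ← Sym2.map_map, ha_edge, hg]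
  have hconj : SemiconjBy (ψ b * ψ (b⁻¹ * g * a) * ψ a⁻¹) (θB i) (θB j) :=
    (hb.mul_left (commute_map_theta_zero hψ hn hstab)).mul_left (semiconjBy_map_inv ha)
  rwa [← map_mul, ← map_mul, show b * (b⁻¹ * g * a) * a⁻¹ = g by group] at hconj

theorem map_mul_theta_eq_of_map_edge_eq {i j : Fin (n - 1)} {g v : Equiv.Perm (Fin n)}
    (h : (edge j).map g = (edge i).map v) : ψ v * θB i = ψ g * θB j * ψ (g⁻¹ * v) := by
  have hedge : (edge i).map (g⁻¹ * v) = edge j := by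
    apply Sym2.map.injective g.injective
    rw [h, Sym2.map_map, ← Equiv.Perm.coe_mul, mul_inv_cancel_left]
  rw [mul_assoc, ← semiconjBy_map_theta hψ hedge, ← mul_assoc, ← map_mul, mul_inv_cancel_left]

theorem theta_mul_map_mul_theta_of_share_one_point {m i : Fin (n - 1)} {v : Equiv.Perm (Fin n)}
    {q r t : Fin n}
    (hm : edge m = s(q, r)) (hv : (edge i).map v = s(q, t)) (hrt : r ≠ t) :
    θB m * ψ v * θB i = θB m * ψ (Equiv.swap q t * Equiv.swap q r * v) := by
  have hqr : q ≠ r := ne_of_map_edge_eq (g := 1) ((congrFun Sym2.map_id _).trans hm)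
  have hqt : q ≠ t := ne_of_map_edge_eq hv
  have hn : 1 < n - 1 := by omega
  let z : Fin (n - 1) := ⟨0, by omega⟩
  let o : Fin (n - 1) := ⟨1, hn⟩
  obtain ⟨g, hgr, hgq, hgt⟩ :
      ∃ g : Equiv.Perm (Fin n), g (lo z) = r ∧ g (lo o) = q ∧ g (hi o) = t :=
    exists_perm_mapping_triple (by simp [lo, z, o]) (by simp [lo, hi, z, o]) (lo_ne_hi o)
      hqr.symm hrt hqt
  have hz : (edge z).map g = s(q, r) := Sym2.eq_swap.trans (congrArg₂ (s(·, ·)) hgq hgr)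
  have ho : (edge o).map g = s(q, t) := congrArg₂ (s(·, ·)) hgq hgt
  have hconj : ψ g * θB z = θB m * ψ g := semiconjBy_map_theta hψ (hz.trans hm.symm)
  have hperm : g * (sPerm o * sPerm z) * (g⁻¹ * v) = Equiv.swap q t * Equiv.swap q r * v := by
    rw [← conj_sPerm_of_map_edge_eq ho, ← conj_sPerm_of_map_edge_eq hz]
    group
  calc θB m * ψ v * θB i
      = θB m * ψ g * θB o * ψ (g⁻¹ * v) := by
        rw [mul_assoc, map_mul_theta_eq_of_map_edge_eq hψ (ho.trans hv.symm)]
        simp only [mul_assoc]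
    _ = ψ g * (θB z * θB o) * ψ (g⁻¹ * v) := by
        rw [← hconj, mul_assoc (ψ g)]
    _ = ψ g * θB z * (σB o * σB z) * ψ (g⁻¹ * v) := by
        rw [theta_mul_theta_eq_theta_mul_sigma_mul_sigma (by simp [z, o, Nat.dist]),
          mul_assoc (ψ g) (θB z)]
    _ = θB m * ψ (g * (sPerm o * sPerm z) * (g⁻¹ * v)) := by
        rw [hconj, ← hψ, ← hψ]
        simp only [map_mul, mul_assoc]
    _ = _ := by rw [hperm]

end Arcs

section Canonical

variable {k : ℕ}

theorem delta_succ (hk : k + 1 ≤ n / 2) :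
    δB n (k + 1) hk = δB n k (by omega) * θB ⟨2 * k, by omega⟩ := by
  rw [δB, List.ofFn_succ', List.prod_concat]
  rfl

theorem delta_mul_theta (hk : k ≤ n / 2) {j : ℕ} (hj : j < k) :
    δB n k hk * θB ⟨2 * j, by omega⟩ = δB n k hk := by
  induction k with
  | zero => omega
  | succ k ih =>
    rw [delta_succ, mul_assoc]
    obtain rfl | hjk : j = k ∨ j < k := by omega
    · rw [theta_mul_self]
    · rw [commute_theta_theta (by simp only [Nat.dist]; omega), ← mul_assoc, ih (by omega) hjk]

theorem commute_sigma_delta (hk : k ≤ n / 2) {i : Fin (n - 1)} (hki : 2 * k ≤ i.1) :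
    Commute (σB i) (δB n k hk) := by
  refine Commute.list_prod_right _ _ (List.forall_mem_ofFn_iff.2 fun j => ?_)
  exact (commute_theta_sigma (by simp only [Nat.dist]; omega)).symm

/-- `x` lies in the orbit of some canonical element `δ_k` under left and right multiplication by
`ψ`-images of permutations. -/
def IsOrbitCanonical (ψ : Equiv.Perm (Fin n) →* BrauerMonoid n) (x : BrauerMonoid n) : Prop :=
  ∃ (k : ℕ) (hk : k ≤ n / 2) (w v : Equiv.Perm (Fin n)), x = ψ w * δB n k hk * ψ v

variable {ψ : Equiv.Perm (Fin n) →* BrauerMonoid n}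

namespace IsOrbitCanonical

theorem delta (hk : k ≤ n / 2) : IsOrbitCanonical ψ (δB n k hk) :=
  ⟨k, hk, 1, 1, by simp⟩

theorem mul_map {x : BrauerMonoid n} (hx : IsOrbitCanonical ψ x) (g : Equiv.Perm (Fin n)) :
    IsOrbitCanonical ψ (x * ψ g) := by
  obtain ⟨k, hk, w, v, rfl⟩ := hx
  exact ⟨k, hk, w, v * g, by rw [map_mul, ← mul_assoc]⟩

theorem map_mul {x : BrauerMonoid n} (hx : IsOrbitCanonical ψ x) (g : Equiv.Perm (Fin n)) :
    IsOrbitCanonical ψ (ψ g * x) := by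
  obtain ⟨k, hk, w, v, rfl⟩ := hx
  exact ⟨k, hk, g * w, v, by simp only [_root_.map_mul, mul_assoc]⟩

end IsOrbitCanonical

variable (hψ : ∀ i : Fin (n - 1), ψ (sPerm i) = σB i)

include hψ

theorem exists_delta_mul_map_mul_theta_eq_delta_mul_map (hk : k ≤ n / 2) {v : Equiv.Perm (Fin n)}
    {i : Fin (n - 1)} {a : Fin n} (ha : a ∈ (edge i).map v) (hak : a.1 < 2 * k) :
    ∃ u : Equiv.Perm (Fin n), δB n k hk * ψ v * θB i = δB n k hk * ψ u := by
  let m : Fin (n - 1) := ⟨2 * (a.1 / 2), by omega⟩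
  have habsorb : δB n k hk * θB m = δB n k hk := delta_mul_theta hk (by omega)
  have ham : a ∈ edge m := by
    simp only [edge, Sym2.mem_iff, lo, hi, m, Fin.ext_iff]
    omega
  obtain ⟨b, hb⟩ := ha
  obtain ⟨a', ha'⟩ := ham
  by_cases hab : a' = b
  · have hedge : (edge i).map v = edge m := by rw [hb, ha', hab]
    exact ⟨v, by rw [mul_assoc, semiconjBy_map_theta hψ hedge, ← mul_assoc, habsorb]⟩
  · refine ⟨Equiv.swap a b * Equiv.swap a a' * v, ?_⟩
    rw [← habsorb, mul_assoc, mul_assoc, ← mul_assoc (θB m),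
      theta_mul_map_mul_theta_of_share_one_point hψ ha' hb hab, ← mul_assoc]

theorem exists_delta_mul_map_mul_theta_eq_map_mul_delta_succ_mul_map (hk : k ≤ n / 2)
    {v : Equiv.Perm (Fin n)} {i : Fin (n - 1)} (hv : ∀ a ∈ (edge i).map v, 2 * k ≤ a.1) :
    ∃ (hk' : k + 1 ≤ n / 2) (w u : Equiv.Perm (Fin n)),
      δB n k hk * ψ v * θB i = ψ w * δB n (k + 1) hk' * ψ u := by
  have hlo : 2 * k ≤ (v (lo i)).1 := hv _ (Sym2.mem_mk_left _ _)
  have hhi : 2 * k ≤ (v (hi i)).1 := hv _ (Sym2.mem_mk_right _ _)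
  have hne : v (lo i) ≠ v (hi i) := v.injective.ne (lo_ne_hi i)
  have hk' : k + 1 ≤ n / 2 := by omega
  let m : Fin (n - 1) := ⟨2 * k, by omega⟩
  obtain ⟨g, hfix, hglo, hghi⟩ := exists_perm_fixing_lt_and_mapping_edge (m := m) hne hlo hhi
  have hedge : (edge m).map g = (edge i).map v := congrArg₂ (s(·, ·)) hglo hghi
  have hcomm : Commute (ψ g) (δB n k hk) :=
    commute_map_of_fixed hψ (fun _ => commute_sigma_delta hk) hfix
  refine ⟨hk', g, g⁻¹ * v, ?_⟩
  calc δB n k hk * ψ v * θB i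
      = δB n k hk * ψ g * θB m * ψ (g⁻¹ * v) := by
        rw [mul_assoc, map_mul_theta_eq_of_map_edge_eq hψ hedge]
        simp only [mul_assoc]
    _ = ψ g * δB n (k + 1) hk' * ψ (g⁻¹ * v) := by
        rw [← hcomm.eq, delta_succ, mul_assoc (ψ g)]

theorem IsOrbitCanonical.mul_theta {x : BrauerMonoid n} (hx : IsOrbitCanonical ψ x)
    (i : Fin (n - 1)) : IsOrbitCanonical ψ (x * θB i) := by
  obtain ⟨k, hk, w, v, rfl⟩ := hx
  suffices h : IsOrbitCanonical ψ (δB n k hk * ψ v * θB i) by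
    simpa only [mul_assoc] using h.map_mul w
  by_cases hv : ∃ a ∈ (edge i).map v, a.1 < 2 * k
  · obtain ⟨a, ha, hak⟩ := hv
    obtain ⟨u, hu⟩ := exists_delta_mul_map_mul_theta_eq_delta_mul_map hψ hk ha hak
    exact hu ▸ (IsOrbitCanonical.delta hk).mul_map u
  · push Not at hv
    exact ⟨k + 1, exists_delta_mul_map_mul_theta_eq_map_mul_delta_succ_mul_map hψ hk hv⟩

end Canonical

end BrauerMonoid

/-- Lemma `lemma207` of Kudryavtseva–Mazorchuk: every element of `T` lies in the
`S_n × S_n`-orbit of a canonical element, i.e. every `x ∈ T` can be written as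
`x = ψ(w) δ_k ψ(v)` with `0 ≤ k ≤ ⌊n/2⌋`. -/
theorem brauer_orbit_canonical (n : ℕ) (hn : 1 ≤ n)
    (ψ : Equiv.Perm (Fin n) →* BrauerMonoid n)
    (hψ : ∀ i : Fin (n - 1), ψ (sPerm i) = σB i)
    (x : BrauerMonoid n) :
    ∃ (k : ℕ) (hk : k ≤ n / 2) (w v : Equiv.Perm (Fin n)),
      x = ψ w * δB n k hk * ψ v := by
  change BrauerMonoid.IsOrbitCanonical ψ x
  induction x using Submonoid.induction_of_closure_eq_top_right
    (PresentedMonoid.closure_range_of (BrauerRel n)) with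
  | one => exact BrauerMonoid.IsOrbitCanonical.delta (Nat.zero_le _)
  | mul_right x y hy hx =>
    obtain ⟨i | i, rfl⟩ := hy
    · change BrauerMonoid.IsOrbitCanonical ψ (x * σB i)
      rw [← hψ]
      exact hx.mul_map (sPerm i)
    · exact hx.mul_theta hψ i
end
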